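/- arXiv:2105.10677 — 2 statements merged into one kernel-verified Lean document; each statement's English description precedes it below -/
import Mathlib

section
/- Every regular domain is a hybrid* domain: if D is a regular domain of preferences over A, then there exist thresholds 1 ≤ p < q ≤ m such that D is a (p, q)-hybrid* domain. -/
open Finset

noncomputable section

/-- A preference is a linear order over the `m` alternatives, represented as a bijection
from rank positions (0-based: position `0` is the top) to alternatives. -/
abbrev Pref (m : ℕ) := Fin m ≃ Fin m

namespace PFBRPaper

variable {m n : ℕ}

/-- `a` is strictly preferred to `b` under `P`. -/
def Prefers (P : Pref m) (a b : Fin m) : Prop := P.symm a < P.symm b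

/-- The last alternative `a_m` (0-based index `m-1`). -/
def lastAlt (m : ℕ) [NeZero m] : Fin m :=
  ⟨m - 1, Nat.sub_lt (Nat.pos_of_ne_zero (NeZero.ne m)) Nat.one_pos⟩

/-- Every alternative is top-ranked by some preference in the domain. -/
def MinimallyRich [NeZero m] (D : Set (Pref m)) : Prop :=
  ∀ a : Fin m, ∃ P ∈ D, P 0 = a

/-- The preference ranking `a_m` first, ..., `a_1` last. -/
def revPref (m : ℕ) : Pref m :=
  ⟨Fin.rev, Fin.rev, fun i => Fin.rev_rev i, fun i => Fin.rev_rev i⟩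

/-- Diversity, with the labeling convention: the domain contains the preference ranking
`a_1` first, `a_2` second, ..., `a_m` last (the identity), together with its
complete reversal. -/
def Diversity (D : Set (Pref m)) : Prop :=
  Equiv.refl (Fin m) ∈ D ∧ revPref m ∈ D

/-- Two preferences are adjacent: the alternatives at two contiguous rank positions are
swapped and everything else is unchanged. -/
def Adjacent (P P' : Pref m) : Prop :=
  P ≠ P' ∧ ∃ k : ℕ, ∃ hk : k + 1 < m,
    P ⟨k, Nat.lt_of_succ_lt hk⟩ = P' ⟨k + 1, hk⟩ ∧
    P ⟨k + 1, hk⟩ = P' ⟨k, Nat.lt_of_succ_lt hk⟩ ∧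
    ∀ l : Fin m, (l : ℕ) ≠ k → (l : ℕ) ≠ k + 1 → P l = P' l

/-- `π 0, …, π (v-1)` is a path in `D` connecting `P` and `P'`. -/
def IsPath (D : Set (Pref m)) (P P' : Pref m) (π : ℕ → Pref m) (v : ℕ) : Prop :=
  1 ≤ v ∧ (∀ i < v, π i ∈ D) ∧
  (∀ i < v, ∀ j < v, π i = π j → i = j) ∧
  π 0 = P ∧ π (v - 1) = P' ∧
  ∀ i, i + 1 < v → Adjacent (π i) (π (i + 1))

/-- The path `π 0, …, π (v-1)` has no `{a,b}`-restoration: the relative ranking of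
`a` and `b` switches at most once along the path. -/
def NoRestoration (π : ℕ → Pref m) (v : ℕ) (a b : Fin m) : Prop :=
  ∀ i j k : ℕ, i < j → j < k → k < v →
    ¬(Prefers (π i) a b ∧ Prefers (π j) b a ∧ Prefers (π k) a b) ∧
    ¬(Prefers (π i) b a ∧ Prefers (π j) a b ∧ Prefers (π k) b a)

def NoRestorationDomain (D : Set (Pref m)) : Prop :=
  ∀ P ∈ D, ∀ P' ∈ D, P ≠ P' → ∀ a b : Fin m,
    ∃ π v, IsPath D P P' π v ∧ NoRestoration π v a b

def RegularDomain [NeZero m] (D : Set (Pref m)) : Prop :=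
  MinimallyRich D ∧ Diversity D ∧ NoRestorationDomain D

/-- `a ≈ b`: the two alternatives are strongly connected in the domain `D`. -/
def StronglyConnected [NeZero m] (D : Set (Pref m)) (a b : Fin m) : Prop :=
  a ≠ b ∧ ∃ P ∈ D, ∃ P' ∈ D,
    P 0 = a ∧ P 1 = b ∧ P' 0 = b ∧ P' 1 = a ∧
    ∀ k : Fin m, 2 ≤ (k : ℕ) → P k = P' k

/-- `l` is a vertex-path of the graph `G_≈^B(D)`. -/
def IsVertexPathOn [NeZero m] (D : Set (Pref m)) (B : Set (Fin m)) (l : List (Fin m)) : Prop :=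
  l ≠ [] ∧ l.Nodup ∧ (∀ x ∈ l, x ∈ B) ∧ l.Chain' (StronglyConnected D)

/-- `l` is a vertex-path of `G_≈^B(D)` connecting `a` and `b`. -/
def VertexPathBetween [NeZero m] (D : Set (Pref m)) (B : Set (Fin m)) (a b : Fin m)
    (l : List (Fin m)) : Prop :=
  IsVertexPathOn D B l ∧ l.head? = some a ∧ l.getLast? = some b

/-- `a` is a leaf of the subgraph `G_≈^B(D)`. -/
def IsLeaf [NeZero m] (D : Set (Pref m)) (B : Set (Fin m)) (a : Fin m) : Prop :=
  a ∈ B ∧ ∃! b : Fin m, b ∈ B ∧ StronglyConnected D a b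

/-- Single-peakedness w.r.t. the natural order. -/
def SinglePeaked [NeZero m] (P : Pref m) : Prop :=
  ∀ a b : Fin m, ((a < b ∧ b < P 0) ∨ (P 0 < b ∧ b < a)) → Prefers P b a

/-- A `(p,q)`-hybrid preference (thresholds `p < q`, 0-based). -/
def IsHybridPref [NeZero m] (p q : Fin m) (P : Pref m) : Prop :=
  (∀ r s : Fin m, ((r ≤ p ∧ s ≤ p) ∨ (q ≤ r ∧ q ≤ s)) →
      ((r < s ∧ s < P 0) ∨ (P 0 < s ∧ s < r)) → Prefers P s r) ∧
  (P 0 ≤ p → ∀ l : Fin m, p ≤ l → l ≤ q → l ≠ p → Prefers P p l) ∧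
  (q ≤ P 0 → ∀ l : Fin m, p ≤ l → l ≤ q → l ≠ q → Prefers P q l)

/-- The `(p,q)`-hybrid domain of all `(p,q)`-hybrid preferences. -/
def hybridDomain [NeZero m] (p q : Fin m) : Set (Pref m) := {P | IsHybridPref p q P}

/-- `D` is a `(p,q)`-hybrid* domain. -/
def IsHybridStar [NeZero m] (D : Set (Pref m)) (p q : Fin m) : Prop :=
  D ⊆ hybridDomain p q ∧
  (∀ k : Fin m, k ≠ 0 → k ≠ lastAlt m →
      ∃ l, VertexPathBetween D Set.univ 0 (lastAlt m) l ∧ k ∈ l) ∧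
  ((p : ℕ) + 1 < (q : ℕ) → ∀ a : Fin m, ¬ IsLeaf D (Set.Icc p q) a)

/-- A lottery over the alternatives. -/
def Lottery (m : ℕ) : Type :=
  {f : Fin m → ℝ // (∀ a, 0 ≤ f a) ∧ ∑ a, f a = 1}

/-- The probability that a lottery assigns to a set of alternatives. -/
def Lottery.prob (lam : Lottery m) (B : Finset (Fin m)) : ℝ := ∑ a ∈ B, lam.1 a

/-- The support of a lottery. -/
def Lottery.supp (lam : Lottery m) : Finset (Fin m) :=
  Finset.univ.filter (fun a => 0 < lam.1 a)

/-- The degenerate lottery on `a`. -/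
def degLottery (a : Fin m) : Lottery m :=
  ⟨fun b => if b = a then 1 else 0,
   fun b => by by_cases h : b = a <;> simp [h],
   by simp⟩

/-- A profile of preferences drawn from the domain `D`. -/
abbrev Profile (D : Set (Pref m)) (n : ℕ) := Fin n → D

/-- The top-ranked alternative of a preference in the domain. -/
def topOf [NeZero m] {D : Set (Pref m)} (P : D) : Fin m := P.1 0

def Unanimous [NeZero m] {D : Set (Pref m)} (φ : Profile D n → Lottery m) : Prop :=
  ∀ (P : Profile D n) (a : Fin m), (∀ i, topOf (P i) = a) → φ P = degLottery a

/-- The total probability of the `k` top-ranked alternatives of `P` under `lam`. -/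
def topSum (lam : Lottery m) (P : Pref m) (k : ℕ) : ℝ :=
  ∑ t ∈ Finset.univ.filter (fun t : Fin m => (t : ℕ) < k), lam.1 (P t)

/-- Strategy-proofness: truth-telling first-order stochastically dominates any unilateral
misrepresentation. -/
def StrategyProof {D : Set (Pref m)} (φ : Profile D n → Lottery m) : Prop :=
  ∀ (i : Fin n) (P : Profile D n) (Pi' : D) (k : ℕ), k ≤ m →
    topSum (φ (Function.update P i Pi')) (P i).1 k ≤ topSum (φ P) (P i).1 k

def TopsOnly [NeZero m] {D : Set (Pref m)} (φ : Profile D n → Lottery m) : Prop :=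
  ∀ P P' : Profile D n, (∀ i, topOf (P i) = topOf (P' i)) → φ P = φ P'

def Anonymous {D : Set (Pref m)} (φ : Profile D n → Lottery m) : Prop :=
  ∀ (P : Profile D n) (σ : Equiv.Perm (Fin n)), φ (P ∘ σ) = φ P

/-- The interval `[a_k, a_m]`. -/
def upSet (k : Fin m) : Finset (Fin m) := Finset.univ.filter (fun a => k ≤ a)

/-- The interval `[a_1, a_k]`. -/
def downSet (k : Fin m) : Finset (Fin m) := Finset.univ.filter (fun a => a ≤ k)

/-- The interval `[a_p, a_q]`. -/
def midSet (p q : Fin m) : Finset (Fin m) := Finset.univ.filter (fun a => p ≤ a ∧ a ≤ q)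

/-- `S(k,P)`: the voters whose preference top is not to the left of `a_k`. -/
def voterSet [NeZero m] {D : Set (Pref m)} (P : Profile D n) (k : Fin m) : Finset (Fin n) :=
  Finset.univ.filter (fun i => k ≤ topOf (P i))

/-- `β_{S(k,P)}([a_k, a_m])`, with the convention that it is `0` for `k = m`. -/
def tailProb [NeZero m] {D : Set (Pref m)} (β : Finset (Fin n) → Lottery m)
    (P : Profile D n) (k : ℕ) : ℝ :=
  if h : k < m then (β (voterSet P ⟨k, h⟩)).prob (upSet ⟨k, h⟩) else 0

def BallotUnanimity [NeZero m] (β : Finset (Fin n) → Lottery m) : Prop :=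
  β Finset.univ = degLottery (lastAlt m) ∧ β ∅ = degLottery 0

def BallotMonotone (β : Finset (Fin n) → Lottery m) : Prop :=
  ∀ S T : Finset (Fin n), S ⊂ T →
    ∀ k : Fin m, (β S).prob (upSet k) ≤ (β T).prob (upSet k)

/-- `φ` is a probabilistic fixed ballot rule with probabilistic ballots `β`. -/
def IsPFBRWith [NeZero m] {D : Set (Pref m)} (φ : Profile D n → Lottery m)
    (β : Finset (Fin n) → Lottery m) : Prop :=
  BallotUnanimity β ∧ BallotMonotone β ∧
  ∀ (P : Profile D n) (k : Fin m),
    (φ P).1 k = tailProb β P (k : ℕ) - tailProb β P ((k : ℕ) + 1)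

def IsPFBR [NeZero m] {D : Set (Pref m)} (φ : Profile D n → Lottery m) : Prop :=
  ∃ β, IsPFBRWith φ β

/-- The constrained random-dictatorship condition w.r.t. `a_p` and `a_q`. -/
def ConstrainedRD (p q : Fin m) (β : Finset (Fin n) → Lottery m) : Prop :=
  ∃ ε : Fin n → ℝ, (∀ i, 0 ≤ ε i) ∧ ∑ i, ε i = 1 ∧
    ∀ S : Finset (Fin n),
      (β S).prob (upSet q) = ∑ i ∈ S, ε i ∧
      (β S).prob (downSet p) = ∑ i ∈ Sᶜ, ε i

/-- The constrained random-dictatorship condition w.r.t. `a_p` and `a_q` with every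
conditional dictatorial coefficient equal to `1/n`. -/
def ConstrainedRDUniform (p q : Fin m) (β : Finset (Fin n) → Lottery m) : Prop :=
  ∀ S : Finset (Fin n),
    (β S).prob (upSet q) = (S.card : ℝ) / (n : ℝ) ∧
    (β S).prob (downSet p) = ((Sᶜ : Finset (Fin n)).card : ℝ) / (n : ℝ)

/-- Anonymity at the level of probabilistic ballots. -/
def BallotAnonymous (β : Finset (Fin n) → Lottery m) : Prop :=
  ∀ S S' : Finset (Fin n), S.Nonempty → S'.Nonempty → S.card = S'.card → β S = β S'

/-- Per-capita monotonicity w.r.t. `a_p` and `a_q`. -/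
def PerCapitaMonotone (p q : Fin m) (β : Finset (Fin n) → Lottery m) : Prop :=
  ∀ S S' : Finset (Fin n), S.Nonempty → S ⊂ S' → S' ⊂ Finset.univ →
    (∀ t : Fin m, q ≤ t →
      (β S).prob (upSet t) / (S.card : ℝ) ≤ (β S').prob (upSet t) / (S'.card : ℝ)) ∧
    (∀ s : Fin m, s ≤ p →
      (β Sᶜ).prob (downSet s) / (S.card : ℝ) ≤ (β S'ᶜ).prob (downSet s) / (S'.card : ℝ))

/-- Decomposability: `φ` is a mixture of finitely many unanimous and strategy-proof
deterministic social choice functions. -/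
def Decomposable [NeZero m] {D : Set (Pref m)} (φ : Profile D n → Lottery m) : Prop :=
  ∃ (r : ℕ) (f : Fin r → (Profile D n → Fin m)) (α : Fin r → ℝ),
    (∀ k, 0 < α k) ∧ ∑ k, α k = 1 ∧
    (∀ k, Unanimous (fun P => degLottery (f k P)) ∧
          StrategyProof (fun P => degLottery (f k P))) ∧
    ∀ (P : Profile D n) (a : Fin m),
      (φ P).1 a = ∑ k, α k * (if f k P = a then 1 else 0)

/-- `b̂_S^R`: the `≺`-minimum of `supp(β_S) ∩ R` (with the convention `b̂_N^R = a_m`). -/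
def bR [NeZero m] (β : Finset (Fin n) → Lottery m) (q : Fin m) (S : Finset (Fin n)) : Fin m :=
  if h : ((β S).supp ∩ upSet q).Nonempty then ((β S).supp ∩ upSet q).min' h else lastAlt m

/-- `b̂_S^L`: the `≺`-maximum of `supp(β_S) ∩ L` (with the convention `b̂_∅^L = a_1`). -/
def bL [NeZero m] (β : Finset (Fin n) → Lottery m) (p : Fin m) (S : Finset (Fin n)) : Fin m :=
  if h : ((β S).supp ∩ downSet p).Nonempty then ((β S).supp ∩ downSet p).max' h else 0

/-- `α = min over nonempty S ⊂ N of min(β_S(b̂_S^R)/|S|, β_S(b̂_S^L)/(n-|S|))`. -/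
def alphaVal [NeZero m] (β : Finset (Fin n) → Lottery m) (p q : Fin m) : ℝ :=
  sInf {x : ℝ | ∃ S : Finset (Fin n), S.Nonempty ∧ S ≠ Finset.univ ∧
    x = min ((β S).1 (bR β q S) / (S.card : ℝ))
            ((β S).1 (bL β p S) / ((n : ℝ) - (S.card : ℝ)))}

/-- `γ_S = (|S|/n) e_{b̂_S^R} + ((n-|S|)/n) e_{b̂_S^L}`, pointwise. -/
def gammaFun [NeZero m] (β : Finset (Fin n) → Lottery m) (p q : Fin m)
    (S : Finset (Fin n)) (a : Fin m) : ℝ :=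
  ((S.card : ℝ) / (n : ℝ)) * (if a = bR β q S then 1 else 0)
  + (((n : ℝ) - (S.card : ℝ)) / (n : ℝ)) * (if a = bL β p S then 1 else 0)

/-- The max-min formula `f(P) = max_{S ⊆ N} min({r_1(P_j) : j ∈ S} ∪ {b_S})`. -/
def fbrOutcome [NeZero m] {D : Set (Pref m)} (b : Finset (Fin n) → Fin m)
    (P : Profile D n) : Fin m :=
  Finset.univ.sup' Finset.univ_nonempty
    (fun S : Finset (Fin n) =>
      (insert (b S) (S.image (fun j => topOf (P j)))).inf' (Finset.insert_nonempty _ _) id)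

/-- `f` is a `(p,q)`-fixed ballot rule with deterministic ballots `b` and constrained
dictator `i`. -/
def IsFBRWith [NeZero m] {D : Set (Pref m)} (p q : Fin m) (f : Profile D n → Fin m)
    (b : Finset (Fin n) → Fin m) (i : Fin n) : Prop :=
  b Finset.univ = lastAlt m ∧ b ∅ = 0 ∧
  (∀ S T : Finset (Fin n), S ⊂ T → b S ≤ b T) ∧
  (∀ S : Finset (Fin n), (i ∈ S → q ≤ b S) ∧ (i ∉ S → b S ≤ p)) ∧
  ∀ P : Profile D n, f P = fbrOutcome b P

end PFBRPaper

open PFBRPaper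

/-!
If two preferences of a no-restoration domain both rank `a` above `b`, some path between them keeps
`a` above `b`, so `b` is never on top along it and the tops trace a walk in the graph of strong
connectedness that avoids `b`. Starting from the two completely reversed preferences, this shows
that deleting an alternative leaves every other alternative joined to the end of the order on its
side; a detour argument then puts every alternative on a path between the two ends. The same walks
show that an alternative which no edge jumps over is ranked above everything beyond it. The
thresholds are chosen as a tightest pair enclosing all alternatives that some edge jumps over;
tightness provides the edges that rule out leaves at the thresholds.
-/

namespace PFBRPaper

section Paths

open SimpleGraph

variable {V : Type*} {G : SimpleGraph V} {s t u v w : V}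

theorem isPath_append_iff (p : G.Walk u v) (q : G.Walk v w) :
    (p.append q).IsPath ↔
      p.IsPath ∧ q.IsPath ∧ ∀ x ∈ p.support, x ∈ q.support → x = v := by
  obtain ⟨l, hl⟩ : ∃ l, q.support = v :: l := ⟨_, q.cons_tail_support.symm⟩
  have hv : v ∈ p.support := p.end_mem_support
  simp only [Walk.isPath_def, Walk.support_append, hl, List.tail_cons, List.nodup_append',
    List.nodup_cons, List.disjoint_left, List.mem_cons]
  grind

theorem isPath_append_replace_middle {p₁ : G.Walk s v} {p₂ r : G.Walk v w} {p₃ : G.Walk w t}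
    (hp : (p₁.append (p₂.append p₃)).IsPath) (hr : r.IsPath)
    (hmeet : ∀ x ∈ r.support, x ∈ p₁.support ∨ x ∈ p₃.support → x = v ∨ x = w) :
    (p₁.append (r.append p₃)).IsPath := by
  simp only [isPath_append_iff, Walk.mem_support_append_iff] at hp ⊢
  have hv₂ : v ∈ p₂.support := p₂.start_mem_support
  have hw₂ : w ∈ p₂.support := p₂.end_mem_support
  grind

theorem exists_isPath_first_mem (p : G.Walk u w) {S : Set V} (hw : w ∈ S) :
    ∃ x ∈ S, ∃ q : G.Walk u x,
      q.IsPath ∧ q.support ⊆ p.support ∧ ∀ y ∈ q.support, y ∈ S → y = x := by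
  classical
  obtain ⟨x, hxS, hx, hfirst⟩ := p.bypass.exists_mem_support_forall_mem_support_imp_eq
    {y ∈ p.bypass.support.toFinset | y ∈ S} ⟨w, by simp [hw]⟩
  have hsub := p.bypass.support_takeUntil_subset_support hx
  refine ⟨x, by simpa [hx] using hxS, p.bypass.takeUntil x hx, p.bypass_isPath.takeUntil hx,
    List.Subset.trans hsub p.support_bypass_subset_support, fun y hy hyS => ?_⟩
  exact hfirst y (by simpa [hyS] using hsub hy) hy

/- Follow the walk from `u` until it first meets `p`. The edge `v u` and this walk form a
detour between two vertices of `p`, which can replace the segment of `p` between them. -/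
theorem exists_isPath_mem_support_of_adj {p : G.Walk s t} (hp : p.IsPath) (hv : v ∈ p.support)
    (hvu : G.Adj v u) (hw : w ∈ p.support) {q : G.Walk u w} (hvq : v ∉ q.support) :
    ∃ p' : G.Walk s t, p'.IsPath ∧ u ∈ p'.support := by
  obtain ⟨x, hxp, r, hr, hrq, hfirst⟩ :=
    exists_isPath_first_mem q (S := {y | y ∈ p.support}) hw
  have hvr : v ∉ r.support := fun h => hvq (hrq h)
  set detour : G.Walk v x := Walk.cons hvu r
  have hdetour : detour.IsPath := hr.cons hvr
  have hu : u ∈ detour.support := by simp [detour]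
  have hmeet : ∀ y ∈ detour.support, y ∈ p.support → y = v ∨ y = x := by
    simp only [detour, Walk.support_cons, List.mem_cons]
    exact fun y hy hyp => hy.imp_right (hfirst y · hyp)
  obtain ⟨p₁, p₂, rfl⟩ := Walk.mem_support_iff_exists_append.mp hv
  rcases Walk.mem_support_append_iff .. |>.mp hxp with hx | hx
  · obtain ⟨p₀, p₁, rfl⟩ := Walk.mem_support_iff_exists_append.mp hx
    refine ⟨p₀.append (detour.reverse.append p₂), ?_, by simp [hu]⟩
    rw [← Walk.append_assoc] at hp
    refine isPath_append_replace_middle hp hdetour.reverse fun y hy hy' => ?_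
    simp only [Walk.support_reverse, List.mem_reverse, Walk.mem_support_append_iff] at hy hmeet
    grind
  · obtain ⟨p₂, p₃, rfl⟩ := Walk.mem_support_iff_exists_append.mp hx
    refine ⟨p₁.append (detour.append p₃), ?_, by simp [hu]⟩
    refine isPath_append_replace_middle hp hdetour fun y hy hy' => ?_
    simp only [Walk.mem_support_append_iff] at hmeet
    grind

theorem exists_isPath_mem_support_of_avoiding (hst : G.Reachable s t)
    (havoiding : ∀ u v, u ≠ v →
      (∃ p : G.Walk s u, v ∉ p.support) ∨ ∃ p : G.Walk t u, v ∉ p.support) (v : V) :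
    ∃ p : G.Walk s t, p.IsPath ∧ v ∈ p.support := by
  obtain ⟨p₀, hp₀⟩ := hst.exists_isPath
  have hsv : G.Reachable s v := by
    rcases eq_or_ne v t with rfl | hvt
    · exact hst
    · rcases havoiding v t hvt with ⟨p, -⟩ | ⟨p, hp⟩
      · exact p.reachable
      · exact absurd p.start_mem_support hp
  rw [reachable_iff_reflTransGen] at hsv
  induction hsv with
  | refl => exact ⟨p₀, hp₀, p₀.start_mem_support⟩
  | @tail v u _ hvu ih =>
    obtain ⟨p, hp, hv⟩ := ih
    rcases havoiding u v hvu.ne' with ⟨q, hq⟩ | ⟨q, hq⟩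
    · exact exists_isPath_mem_support_of_adj hp hv hvu p.start_mem_support (q := q.reverse)
        (by simpa using hq)
    · exact exists_isPath_mem_support_of_adj hp hv hvu p.end_mem_support (q := q.reverse)
        (by simpa using hq)

theorem exists_adj_of_walk_leaving (r : G.Walk u w) (hv : v ∉ r.support) {S : Set V} (hu : u ∈ S)
    (hw : w ∉ S) (hexit : ∀ x ∈ S, ∀ y ∉ S, G.Adj x y → x = s) :
    ∃ z ∉ S, z ≠ v ∧ G.Adj s z := by
  obtain ⟨d, hd, hfst, hsnd⟩ := r.exists_boundary_dart S hu hw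
  have hne : d.snd ≠ v := fun h => hv (h ▸ r.dart_snd_mem_support_of_mem_darts hd)
  exact ⟨d.snd, hsnd, hne, hexit _ hfst _ hsnd d.adj ▸ d.adj⟩

end Paths

section OrderedVertices

open SimpleGraph

variable {V : Type*} [LinearOrder V] {G : SimpleGraph V} {a b c p q u w : V}

/-- The vertices that some edge of `G` jumps over, for a graph on a linearly ordered vertex set.
The thresholds of a hybrid domain enclose the straddled alternatives as tightly as possible. -/
def straddled (G : SimpleGraph V) : Set V := {c | ∃ a b, a < c ∧ c < b ∧ G.Adj a b}

theorem mem_straddled_of_walk (r : G.Walk u w) (hc : c ∉ r.support) (huc : u < c) (hcw : c < w) :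
    c ∈ straddled G := by
  obtain ⟨d, hd, hfst, hsnd⟩ := r.exists_boundary_dart (Set.Iio c) huc hcw.not_gt
  have hne : d.snd ≠ c := fun h => hc (h ▸ r.dart_snd_mem_support_of_mem_darts hd)
  exact ⟨d.fst, d.snd, hfst, lt_of_le_of_ne (not_lt.mp hsnd) hne.symm, d.adj⟩

/-- Deleting a vertex `v` does not disconnect any other vertex from the endpoint of the order on
its side of `v`. -/
structure EndpointAccessible [BoundedOrder V] (G : SimpleGraph V) : Prop where
  from_bot : ∀ ⦃u v : V⦄, u < v → ∃ r : G.Walk ⊥ u, v ∉ r.support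
  from_top : ∀ ⦃u v : V⦄, v < u → ∃ r : G.Walk ⊤ u, v ∉ r.support

variable [BoundedOrder V]

theorem EndpointAccessible.exists_isPath_mem_support (hG : EndpointAccessible G) (hbot : c ≠ ⊥)
    (htop : c ≠ ⊤) : ∃ r : G.Walk ⊥ ⊤, r.IsPath ∧ c ∈ r.support := by
  obtain ⟨r₀, -⟩ := hG.from_bot htop.lt_top
  obtain ⟨r₁, -⟩ := hG.from_top hbot.bot_lt
  exact exists_isPath_mem_support_of_avoiding (r₀.reachable.trans r₁.reachable.symm)
    (fun u v huv => huv.lt_or_gt.imp (hG.from_bot ·) (hG.from_top ·)) c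

theorem EndpointAccessible.exists_gt_adj_ne (hG : EndpointAccessible G) (hp : p ∉ straddled G)
    (hpc : p ⋖ c) (hc : c ∈ straddled G) (b : V) : ∃ z > p, z ≠ b ∧ G.Adj p z := by
  have hexit : ∀ x ≤ p, ∀ y > p, G.Adj x y → x = p := fun x hx y hy hxy =>
    hx.eq_of_not_lt fun hlt => hp ⟨x, y, hlt, hy, hxy⟩
  rcases le_or_gt b c with hbc | hcb
  · obtain ⟨x, y, hxc, hcy, hxy⟩ := hc
    obtain rfl := hexit x (hpc.le_of_lt hxc) y (hpc.lt.trans hcy) hxy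
    exact ⟨y, hpc.lt.trans hcy, (hbc.trans_lt hcy).ne', hxy⟩
  · obtain ⟨r, hr⟩ := hG.from_bot hcb
    simpa using exists_adj_of_walk_leaving (s := p) r hr (S := Set.Iic p) bot_le hpc.lt.not_ge
      (by simpa using hexit)

theorem EndpointAccessible.exists_lt_adj_ne (hG : EndpointAccessible G) (hq : q ∉ straddled G)
    (hcq : c ⋖ q) (hc : c ∈ straddled G) (b : V) : ∃ z < q, z ≠ b ∧ G.Adj q z := by
  have hexit : ∀ x ≥ q, ∀ y < q, G.Adj x y → x = q := fun x hx y hy hxy =>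
    (hx.eq_of_not_lt fun hlt => hq ⟨y, x, hy, hlt, hxy.symm⟩).symm
  rcases le_or_gt c b with hcb | hbc
  · obtain ⟨x, y, hxc, hcy, hxy⟩ := hc
    obtain rfl := hexit y (hcq.ge_of_gt hcy) x (hxc.trans hcq.lt) hxy.symm
    exact ⟨x, hxc.trans hcq.lt, (hxc.trans_le hcb).ne, hxy.symm⟩
  · obtain ⟨r, hr⟩ := hG.from_top hbc
    simpa using exists_adj_of_walk_leaving (s := q) r hr (S := Set.Ici q) le_top hcq.lt.not_ge
      (by simpa using hexit)

theorem EndpointAccessible.exists_adj_ne (hG : EndpointAccessible G) (hbot : a ≠ ⊥) (htop : a ≠ ⊤)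
    (hab : a ≠ b) : ∃ z ≠ b, G.Adj a z := by
  have penultimate_adj : ∀ {e : V}, e ≠ a → ∀ r : G.Walk e a, b ∉ r.support → ∃ z ≠ b, G.Adj a z :=
    fun he r hr => ⟨r.penultimate, fun h => hr (h ▸ r.getVert_mem_support _),
      (r.adj_penultimate (Walk.not_nil_of_ne he)).symm⟩
  rcases hab.lt_or_gt with h | h
  · obtain ⟨r, hr⟩ := hG.from_bot h
    exact penultimate_adj hbot.symm r hr
  · obtain ⟨r, hr⟩ := hG.from_top h
    exact penultimate_adj htop.symm r hr

theorem EndpointAccessible.exists_mem_Icc_adj_ne (hG : EndpointAccessible G)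
    (hS : straddled G ⊆ Set.Ioo p q) (hp : ∃ c ∈ straddled G, p ⋖ c)
    (hq : ∃ c ∈ straddled G, c ⋖ q) (ha : a ∈ Set.Icc p q) (hab : a ≠ b) :
    ∃ z ∈ Set.Icc p q, z ≠ b ∧ G.Adj a z := by
  obtain ⟨c, hc, hpc⟩ := hp
  obtain ⟨d, hd, hdq⟩ := hq
  have hpq : p < q := (hS hc).1.trans (hS hc).2
  have hpS : p ∉ straddled G := fun h => (hS h).1.false
  have hqS : q ∉ straddled G := fun h => (hS h).2.false
  have le_of_adj : ∀ {z}, a < q → G.Adj a z → z ≤ q := fun haq haz =>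
    not_lt.mp fun hqz => hqS ⟨a, _, haq, hqz, haz⟩
  have ge_of_adj : ∀ {z}, p < a → G.Adj a z → p ≤ z := fun hpa haz =>
    not_lt.mp fun hzp => hpS ⟨_, a, hzp, hpa, haz.symm⟩
  rcases ha.1.eq_or_lt with rfl | hpa
  · obtain ⟨z, hpz, hzb, hz⟩ := hG.exists_gt_adj_ne hpS hpc hc b
    exact ⟨z, ⟨hpz.le, le_of_adj hpq hz⟩, hzb, hz⟩
  rcases ha.2.eq_or_lt with rfl | haq
  · obtain ⟨z, hzq, hzb, hz⟩ := hG.exists_lt_adj_ne hqS hdq hd b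
    exact ⟨z, ⟨ge_of_adj hpq hz, hzq.le⟩, hzb, hz⟩
  obtain ⟨z, hzb, hz⟩ := hG.exists_adj_ne (bot_le.trans_lt hpa).ne' (haq.trans_le le_top).ne hab
  exact ⟨z, ⟨ge_of_adj hpa hz, le_of_adj haq hz⟩, hzb, hz⟩

theorem bot_notMem_straddled : ⊥ ∉ straddled G := fun ⟨_, _, h, _⟩ => not_lt_bot h

theorem top_notMem_straddled : ⊤ ∉ straddled G := fun ⟨_, _, _, h, _⟩ => not_top_lt h

theorem exists_minimal_Ioo_superset [Finite V] [Nontrivial V] {S : Set V} (hbot : ⊥ ∉ S)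
    (htop : ⊤ ∉ S) :
    ∃ p q, p < q ∧ S ⊆ Set.Ioo p q ∧ (¬ p ⋖ q → (∃ c ∈ S, p ⋖ c) ∧ ∃ c ∈ S, c ⋖ q) := by
  let T : Set (Vᵒᵈ × V) := {x | x.1.ofDual < x.2 ∧ S ⊆ Set.Ioo x.1.ofDual x.2}
  have hT : (OrderDual.toDual ⊥, ⊤) ∈ T := ⟨bot_lt_top, fun c hc =>
    ⟨bot_lt_iff_ne_bot.mpr (ne_of_mem_of_not_mem hc hbot),
      lt_top_iff_ne_top.mpr (ne_of_mem_of_not_mem hc htop)⟩⟩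
  obtain ⟨⟨p, q⟩, ⟨hpq, hS⟩, hmin⟩ := (Set.toFinite T).exists_minimal ⟨_, hT⟩
  refine ⟨p.ofDual, q, hpq, hS, fun hcov => ⟨?_, ?_⟩⟩
  · obtain ⟨c, hpc, hcq⟩ := exists_covBy_le_of_lt hpq
    have hcq : c < q := hcq.lt_of_ne (by rintro rfl; exact hcov hpc)
    refine ⟨c, by_contra fun hc => ?_, hpc⟩
    have hcT : (OrderDual.toDual c, q) ∈ T := ⟨hcq, fun x hx =>
      ⟨(hpc.ge_of_gt (hS hx).1).lt_of_ne (ne_of_mem_of_not_mem hx hc).symm, (hS hx).2⟩⟩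
    exact (hmin hcT ⟨hpc.le, le_rfl⟩).1.not_gt hpc.lt
  · obtain ⟨c, hpc, hcq⟩ := exists_le_covBy_of_lt hpq
    have hpc : p.ofDual < c := hpc.lt_of_ne (by rintro rfl; exact hcov hcq)
    refine ⟨c, by_contra fun hc => ?_, hcq⟩
    have hcT : (p, c) ∈ T := ⟨hpc, fun x hx =>
      ⟨(hS hx).1, (hcq.le_of_lt (hS hx).2).lt_of_ne (ne_of_mem_of_not_mem hx hc)⟩⟩
    exact (hmin hcT ⟨le_rfl, hcq.le⟩).2.not_gt hcq.lt

end OrderedVertices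

section StrongConnectedness

variable {m : ℕ} {D : Set (Pref m)} {P P' : Pref m} {a b c : Fin m}

theorem not_prefers_iff (hab : a ≠ b) : ¬ Prefers P a b ↔ Prefers P b a :=
  not_lt.trans (P.symm.injective.ne hab).symm.le_iff_lt

theorem NoRestorationDomain.exists_isPath_prefers (hD : NoRestorationDomain D) (hP : P ∈ D)
    (hP' : P' ∈ D) (h : Prefers P a b) (h' : Prefers P' a b) :
    ∃ π v, IsPath D P P' π v ∧ ∀ i < v, Prefers (π i) a b := by
  rcases eq_or_ne P P' with rfl | hne
  · exact ⟨fun _ => P, 1, ⟨le_rfl, fun _ _ => hP, by omega, rfl, rfl, by omega⟩, fun _ _ => h⟩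
  obtain ⟨π, v, hπ, hrestore⟩ := hD P hP P' hP' hne a b
  refine ⟨π, v, hπ, fun i hi => ?_⟩
  obtain ⟨_, _, _, rfl, rfl, _⟩ := hπ
  by_contra hcon
  have hi0 : i ≠ 0 := by rintro rfl; exact hcon h
  have hiv : i ≠ v - 1 := by rintro rfl; exact hcon h'
  have hab : a ≠ b := by rintro rfl; exact lt_irrefl _ h
  exact (hrestore 0 i (v - 1) (by omega) (by omega) (by omega)).1
    ⟨h, (not_prefers_iff hab).mp hcon, h'⟩

variable [NeZero m]

theorem StronglyConnected.symm (h : StronglyConnected D a b) : StronglyConnected D b a := by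
  obtain ⟨hab, P, hP, P', hP', hPa, hPb, hPb', hPa', hrest⟩ := h
  exact ⟨hab.symm, P', hP', P, hP, hPb', hPa', hPa, hPb, fun k hk => (hrest k hk).symm⟩

/-- The graph `G_≈^A(D)` of strongly connected alternatives. -/
def strongGraph (D : Set (Pref m)) : SimpleGraph (Fin m) where
  Adj := StronglyConnected D
  symm := ⟨fun _ _ => StronglyConnected.symm⟩
  loopless := ⟨fun _ h => h.1 rfl⟩

theorem Adjacent.top_eq_or_adj (h : Adjacent P P') (hP : P ∈ D) (hP' : P' ∈ D) :
    P 0 = P' 0 ∨ (strongGraph D).Adj (P 0) (P' 0) := by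
  obtain ⟨_, k, hk, hswap, hswap', hrest⟩ := h
  rcases k.eq_zero_or_pos with rfl | hk0
  · have h1 : (⟨0 + 1, hk⟩ : Fin m) = 1 := Fin.ext (Nat.mod_eq_of_lt hk).symm
    have h10 : (1 : Fin m) ≠ 0 := by simp [← h1, Fin.ext_iff]
    change P 0 = P' ⟨0 + 1, hk⟩ at hswap
    change P ⟨0 + 1, hk⟩ = P' 0 at hswap'
    rw [h1] at hswap hswap'
    refine .inr ⟨?_, P, hP, P', hP', rfl, hswap', rfl, hswap.symm, fun l hl => ?_⟩
    · exact hswap' ▸ P.injective.ne h10.symm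
    · exact hrest l (by omega) (by omega)
  · exact .inl (hrest 0 (by simpa using hk0.ne) (by simp))

theorem Prefers.top_ne (h : Prefers P a b) : P 0 ≠ b := by
  rintro rfl
  simp [Prefers] at h

theorem top_prefers (h : a ≠ P 0) : Prefers P (P 0) a := by
  rw [Prefers, Equiv.symm_apply_apply, Fin.pos_iff_ne_zero, Ne, Equiv.symm_apply_eq]
  exact h

theorem NoRestorationDomain.exists_walk_notMem (hD : NoRestorationDomain D) (hP : P ∈ D)
    (hP' : P' ∈ D) (h : Prefers P a b) (h' : Prefers P' a b) :
    ∃ r : (strongGraph D).Walk (P 0) (P' 0), b ∉ r.support := by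
  obtain ⟨π, v, ⟨hv, hmem, -, rfl, rfl, hadj⟩, hπ⟩ := hD.exists_isPath_prefers hP hP' h h'
  suffices ∀ i < v, ∃ r : (strongGraph D).Walk (π 0 0) (π i 0), b ∉ r.support from
    this (v - 1) (by omega)
  intro i hi
  induction i with
  | zero => exact ⟨.nil, by simpa using (hπ 0 hi).top_ne.symm⟩
  | succ i ih =>
    have hi' : i < v := by omega
    obtain ⟨r, hr⟩ := ih hi'
    rcases (hadj i hi).top_eq_or_adj (hmem i hi') (hmem _ hi) with heq | hstep
    · exact ⟨r.copy rfl heq, by simpa using hr⟩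
    · refine ⟨r.concat hstep, ?_⟩
      rw [SimpleGraph.Walk.support_concat]
      simpa [hr] using (hπ (i + 1) hi).top_ne.symm

theorem exists_walk_from_top (hrich : MinimallyRich D) (hD : NoRestorationDomain D) (hP : P ∈ D)
    (h : Prefers P a b) : ∃ r : (strongGraph D).Walk (P 0) a, b ∉ r.support := by
  obtain ⟨P', hP', rfl⟩ := hrich a
  have hne : b ≠ P' 0 := by rintro rfl; exact lt_irrefl _ h
  exact hD.exists_walk_notMem hP hP' h (top_prefers hne)

theorem prefers_of_notMem_straddled (hrich : MinimallyRich D) (hD : NoRestorationDomain D)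
    (hP : P ∈ D) (hc : c ∉ straddled (strongGraph D))
    (h : P 0 < c ∧ c < a ∨ a < c ∧ c < P 0) : Prefers P c a := by
  by_contra hcon
  have hac : a ≠ c := by rcases h with h | h; exacts [h.2.ne', h.1.ne]
  obtain ⟨r, hr⟩ := exists_walk_from_top hrich hD hP ((not_prefers_iff hac.symm).mp hcon)
  rcases h with ⟨hPc, hca⟩ | ⟨hac, hcP⟩
  · exact hc (mem_straddled_of_walk r hr hPc hca)
  · exact hc (mem_straddled_of_walk r.reverse (by simpa using hr) hac hcP)

theorem subset_hybridDomain {p q : Fin m} (hrich : MinimallyRich D) (hD : NoRestorationDomain D)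
    (hS : straddled (strongGraph D) ⊆ Set.Ioo p q) : D ⊆ hybridDomain p q := by
  intro P hP
  have of_between : ∀ {a c}, c ≤ p ∨ q ≤ c → P 0 < c ∧ c < a ∨ a < c ∧ c < P 0 →
      Prefers P c a := fun hc =>
    prefers_of_notMem_straddled hrich hD hP fun h =>
      hc.elim (hS h).1.not_ge (hS h).2.not_ge
  refine ⟨fun r s hrs h => ?_, fun hPp l hpl _ hlp => ?_, fun hqP l _ hlq hne => ?_⟩
  · exact of_between (hrs.imp And.right And.right) h.symm
  · rcases hPp.eq_or_lt with rfl | hlt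
    · exact top_prefers hlp
    · exact of_between (.inl le_rfl) (.inl ⟨hlt, hpl.lt_of_ne hlp.symm⟩)
  · rcases hqP.eq_or_lt with rfl | hlt
    · exact top_prefers hne
    · exact of_between (.inr le_rfl) (.inr ⟨hlq.lt_of_ne hne, hlt⟩)

theorem RegularDomain.endpointAccessible (hD : RegularDomain D) :
    EndpointAccessible (strongGraph D) := by
  obtain ⟨hrich, ⟨hid, hrev⟩, hnr⟩ := hD
  refine ⟨fun u v huv => exists_walk_from_top hrich hnr hid huv, fun u v hvu => ?_⟩
  have htop : revPref m 0 = ⊤ := Fin.rev_zero_eq_top m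
  exact htop ▸ exists_walk_from_top hrich hnr hrev (Fin.rev_lt_rev.mpr hvu)

theorem vertexPathBetween_support {r : (strongGraph D).Walk a b} (hr : r.IsPath) :
    VertexPathBetween D Set.univ a b r.support :=
  ⟨⟨r.support_ne_nil, hr.support_nodup, fun _ _ => Set.mem_univ _, r.isChain_adj_support⟩,
    by rw [List.head?_eq_some_head r.support_ne_nil, r.head_support],
    by rw [List.getLast?_eq_some_getLast r.support_ne_nil, r.getLast_support]⟩

end StrongConnectedness

end PFBRPaper

/-- Every regular domain is a hybrid* domain. -/
theorem every_regular_domain_is_hybrid_star (m : ℕ) [NeZero m] (hm : 3 ≤ m)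
    (D : Set (Pref m)) (hD : RegularDomain D) :
    ∃ p q : Fin m, p < q ∧ IsHybridStar D p q := by
  have : Nontrivial (Fin m) := Fin.nontrivial_iff_two_le.mpr (by omega)
  have hG := hD.endpointAccessible
  obtain ⟨p, q, hpq, hS, hmin⟩ := exists_minimal_Ioo_superset
    (bot_notMem_straddled (G := strongGraph D)) top_notMem_straddled
  refine ⟨p, q, hpq, subset_hybridDomain hD.1 hD.2.2 hS, fun k hbot htop => ?_,
    fun hgap a hleaf => ?_⟩
  · obtain ⟨r, hr, hk⟩ := hG.exists_isPath_mem_support hbot htop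
    exact ⟨r.support, vertexPathBetween_support hr, hk⟩
  · obtain ⟨ha, b, ⟨-, hab⟩, hunique⟩ := hleaf
    have hcov : ¬ p ⋖ q := fun h => by
      rw [Fin.covBy_iff, Nat.covBy_iff_add_one_eq] at h
      exact hgap.ne h
    obtain ⟨z, hz, hzb, haz⟩ :=
      hG.exists_mem_Icc_adj_ne hS (hmin hcov).1 (hmin hcov).2 ha hab.1
    exact hzb (hunique z ⟨hz, haz⟩)
end
end

section
/- Let 1 ≤ p < q ≤ m with q − p > 1. Every (p, q)-PFBR φ : [D_≺(p, q)]^n → Δ(A) defined on the full (p, q)-hybrid domain is unanimous and strategy-proof. -/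
open Finset

noncomputable section

open PFBRPaper

/-!
Under an expected utility `v`, a PFBR weighs each jump `v a_{k+1} - v a_k` by the tail probability
at `a_{k+1}`. If one voter moves her top from `x` to `y ≥ x`, only the tails on `(x, y]` change:
probability mass moves to the right along the edges between `x` and `y`. Across an edge in `L` or
`R`, a hybrid preference falls when moving away from its top. On the edges in `M`, constrained
random dictatorship makes the change of the tail the constant `ε_i`, so the inner jumps telescope
and only the two ends of the stretch inside `M` matter; the hybrid conditions rank these.
Strategy-proofness is the case where `v` is the indicator of the `k` top-ranked alternatives, with
`-v` and the two profiles exchanged when the voter moves her top to the left.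
-/

namespace PFBRPaper

theorem sum_range_mul_sub_eq_sum_Ico {R : Type*} [CommRing R] {m x y : ℕ} {u d : ℕ → R}
    (hy : y < m) (hd : ∀ k ∉ Ioc x y, d k = 0) :
    ∑ k ∈ range m, u k * (d k - d (k + 1)) =
      ∑ k ∈ Ico x y, d (k + 1) * (u (k + 1) - u k) := by
  have hd_zero : d 0 = 0 := hd 0 (by simp)
  have hd_m : d m = 0 := hd m (by simp [hy])
  calc ∑ k ∈ range m, u k * (d k - d (k + 1))
      = ∑ k ∈ range m, (u k * d k - u (k + 1) * d (k + 1))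
          + ∑ k ∈ range m, d (k + 1) * (u (k + 1) - u k) := by
        rw [← sum_add_distrib]
        exact sum_congr rfl fun k _ => by ring
    _ = ∑ k ∈ range m, d (k + 1) * (u (k + 1) - u k) := by
        rw [sum_range_sub' fun k => u k * d k, hd_zero, hd_m]
        ring
    _ = ∑ k ∈ Ico x y, d (k + 1) * (u (k + 1) - u k) := by
        refine (sum_subset (fun k hk => ?_) fun k _ hk => ?_).symm
        · simp only [Finset.mem_Ico, Finset.mem_range] at hk ⊢
          omega
        · rw [hd (k + 1) (by simp only [Finset.mem_Ico, Finset.mem_Ioc] at hk ⊢; omega), zero_mul]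

theorem sum_Ico_mul_sub_nonpos {R : Type*} [CommRing R] [PartialOrder R] [IsOrderedRing R]
    {x y s t : ℕ} {u d : ℕ → R} {e : R} (hs : x ≤ s) (ht : t ≤ y)
    (hd : ∀ k ∈ Ico x y, 0 ≤ d (k + 1)) (hconst : ∀ k ∈ Ico s t, d (k + 1) = e)
    (hu : AntitoneOn u (Set.Icc x y \ Set.Ioo s t)) :
    ∑ k ∈ Ico x y, d (k + 1) * (u (k + 1) - u k) ≤ 0 := by
  have inner : ∑ k ∈ Ico s t, d (k + 1) * (u (k + 1) - u k) ≤ 0 := by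
    rcases le_or_gt t s with hts | hst
    · simp [Ico_eq_empty_of_le hts]
    have he : 0 ≤ e :=
      hconst s (left_mem_Ico.2 hst) ▸ hd s (Finset.mem_Ico.2 ⟨hs, hst.trans_le ht⟩)
    have hends : u t ≤ u s :=
      hu ⟨⟨hs, hst.le.trans ht⟩, fun h => lt_irrefl s h.1⟩
        ⟨⟨hs.trans hst.le, ht⟩, fun h => lt_irrefl t h.2⟩ hst.le
    calc ∑ k ∈ Ico s t, d (k + 1) * (u (k + 1) - u k)
        = ∑ k ∈ Ico s t, e * (u (k + 1) - u k) :=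
          sum_congr rfl fun k hk => by rw [hconst k hk]
      _ = e * (u t - u s) := by rw [← mul_sum, sum_Ico_sub u hst.le]
      _ ≤ 0 := mul_nonpos_of_nonneg_of_nonpos he (sub_nonpos.2 hends)
  have outer : ∑ k ∈ Ico x y \ Ico s t, d (k + 1) * (u (k + 1) - u k) ≤ 0 := by
    refine sum_nonpos fun k hk => ?_
    obtain ⟨hk, hk'⟩ := mem_sdiff.1 hk
    refine mul_nonpos_of_nonneg_of_nonpos (hd k hk) (sub_nonpos.2 (hu ?_ ?_ k.le_succ)) <;>
    · simp only [Finset.mem_Ico, Set.mem_sdiff, Set.mem_Icc, Set.mem_Ioo] at hk hk' ⊢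
      omega
  rw [← sum_sdiff (Ico_subset_Ico hs ht)]
  exact add_nonpos outer inner

variable {m n : ℕ}

theorem mem_upSet {k a : Fin m} : a ∈ upSet k ↔ k ≤ a := by simp [upSet]

theorem mem_downSet {k a : Fin m} : a ∈ downSet k ↔ a ≤ k := by simp [downSet]

theorem disjoint_upSet_downSet {k p : Fin m} (h : p < k) : Disjoint (upSet k) (downSet p) :=
  disjoint_left.2 fun _ hk hp => (h.trans_le (mem_upSet.1 hk)).not_ge (mem_downSet.1 hp)

namespace Lottery

theorem prob_mono (lam : Lottery m) {A B : Finset (Fin m)} (h : A ⊆ B) :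
    lam.prob A ≤ lam.prob B :=
  sum_le_sum_of_subset_of_nonneg h fun a _ _ => lam.2.1 a

theorem prob_add_prob_le_one (lam : Lottery m) {A B : Finset (Fin m)} (h : Disjoint A B) :
    lam.prob A + lam.prob B ≤ 1 :=
  calc lam.prob A + lam.prob B = lam.prob (A ∪ B) := (sum_union h).symm
    _ ≤ lam.prob univ := lam.prob_mono (subset_univ _)
    _ = 1 := lam.2.2

theorem prob_upSet_eq_of_prob_add_prob_eq_one (lam : Lottery m) {p q k : Fin m} (hpk : p < k)
    (hkq : k ≤ q) (h : lam.prob (upSet q) + lam.prob (downSet p) = 1) :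
    lam.prob (upSet k) = lam.prob (upSet q) := by
  have hle : lam.prob (upSet q) ≤ lam.prob (upSet k) :=
    lam.prob_mono fun a ha => mem_upSet.2 (hkq.trans (mem_upSet.1 ha))
  have hge := lam.prob_add_prob_le_one (disjoint_upSet_downSet hpk)
  linarith

/-- The expected utility of a lottery under the utility function `v`. -/
def expect (lam : Lottery m) (v : Fin m → ℝ) : ℝ := ∑ a, v a * lam.1 a

theorem expect_neg (lam : Lottery m) (v : Fin m → ℝ) : lam.expect (-v) = -lam.expect v := by
  simp [expect]

end Lottery

theorem prob_degLottery (a : Fin m) (B : Finset (Fin m)) :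
    (degLottery a).prob B = if a ∈ B then 1 else 0 := by
  simp [Lottery.prob, degLottery]

/-- The indicator of the `k` top-ranked alternatives of `P`: the utility function whose
expectation is `topSum`. -/
def topIndicator (P : Pref m) (k : ℕ) (a : Fin m) : ℝ := if (P.symm a : ℕ) < k then 1 else 0

theorem topSum_eq_expect (lam : Lottery m) (P : Pref m) (k : ℕ) :
    topSum lam P k = lam.expect (topIndicator P k) := by
  rw [topSum, Lottery.expect, sum_filter,
    ← Equiv.sum_comp P fun a => topIndicator P k a * lam.1 a]
  simp [topIndicator]

theorem topIndicator_le_topIndicator {P : Pref m} {a b : Fin m} (k : ℕ)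
    (h : P.symm a ≤ P.symm b) : topIndicator P k b ≤ topIndicator P k a := by
  unfold topIndicator
  split_ifs with hb ha
  · exact le_rfl
  · exact absurd ((Fin.le_def.1 h).trans_lt hb) ha
  · exact zero_le_one
  · exact le_rfl

section Hybrid

variable [NeZero m] {p q : Fin m} {P : Pref m}

theorem symm_top_le (P : Pref m) (a : Fin m) : P.symm (P 0) ≤ P.symm a := by simp

namespace IsHybridPref

theorem symm_le_of_top_le (hP : IsHybridPref p q P) {a b : Fin m}
    (hLR : b ≤ p ∨ q ≤ a) (ha : P 0 ≤ a) (hab : a ≤ b) : P.symm a ≤ P.symm b := by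
  rcases ha.eq_or_lt with rfl | ha
  · exact symm_top_le P b
  rcases hab.eq_or_lt with rfl | hab
  · exact le_rfl
  exact (hP.1 b a (hLR.imp (fun hb => ⟨hb, hab.le.trans hb⟩) fun ha => ⟨ha.trans hab.le, ha⟩)
    (.inr ⟨ha, hab⟩)).le

theorem symm_le_of_le_top (hP : IsHybridPref p q P) {a b : Fin m}
    (hLR : b ≤ p ∨ q ≤ a) (hb : b ≤ P 0) (hab : a ≤ b) : P.symm b ≤ P.symm a := by
  rcases hb.eq_or_lt with rfl | hb
  · exact symm_top_le P a
  rcases hab.eq_or_lt with rfl | hab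
  · exact le_rfl
  exact (hP.1 a b (hLR.imp (fun hb => ⟨hab.le.trans hb, hb⟩) fun ha => ⟨ha, ha.trans hab.le⟩)
    (.inl ⟨hab, hb⟩)).le

theorem symm_left_threshold_le (hP : IsHybridPref p q P) (htop : P 0 ≤ p) {b : Fin m}
    (hb : p ≤ b) : P.symm p ≤ P.symm b := by
  have middle {l : Fin m} (hpl : p ≤ l) (hlq : l ≤ q) : P.symm p ≤ P.symm l := by
    rcases eq_or_ne l p with rfl | hne
    · exact le_rfl
    · exact (hP.2.1 htop l hpl hlq hne).le
  rcases le_total b q with hbq | hqb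
  · exact middle hb hbq
  rcases le_total p q with hpq | hqp
  · exact (middle hpq le_rfl).trans (hP.symm_le_of_top_le (.inr le_rfl) (htop.trans hpq) hqb)
  · exact hP.symm_le_of_top_le (.inr hqp) htop hb

theorem symm_right_threshold_le (hP : IsHybridPref p q P) (htop : q ≤ P 0) {a : Fin m}
    (ha : a ≤ q) : P.symm q ≤ P.symm a := by
  have middle {l : Fin m} (hpl : p ≤ l) (hlq : l ≤ q) : P.symm q ≤ P.symm l := by
    rcases eq_or_ne l q with rfl | hne
    · exact le_rfl
    · exact (hP.2.2 htop l hpl hlq hne).le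
  rcases le_total p a with hpa | hap
  · exact middle hpa ha
  rcases le_total p q with hpq | hqp
  · exact (middle le_rfl hpq).trans (hP.symm_le_of_le_top (.inl le_rfl) (hpq.trans htop) hap)
  · exact hP.symm_le_of_le_top (.inl hqp) htop ha

theorem monotoneOn_symm_right (hP : IsHybridPref p q P) (y : Fin m) :
    MonotoneOn P.symm (Set.Icc (P 0) y \ Set.Ioo (max (P 0) p) (min y q)) := by
  rintro a ⟨⟨ha, -⟩, ha'⟩ b ⟨⟨-, hby⟩, -⟩ hab
  rcases ha.eq_or_lt with rfl | htop
  · exact symm_top_le P b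
  rcases hab.eq_or_lt with rfl | hab
  · exact le_rfl
  rcases le_or_gt q a with hqa | haq
  · exact hP.symm_le_of_top_le (.inr hqa) ha hab.le
  have hap : a ≤ p := not_lt.1 fun hpa =>
    ha' ⟨max_lt htop hpa, lt_min (hab.trans_le hby) haq⟩
  rcases le_total b p with hbp | hpb
  · exact hP.symm_le_of_top_le (.inl hbp) ha hab.le
  · exact (hP.symm_le_of_top_le (.inl le_rfl) ha hap).trans
      (hP.symm_left_threshold_le (ha.trans hap) hpb)

theorem antitoneOn_symm_left (hP : IsHybridPref p q P) (y : Fin m) :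
    AntitoneOn P.symm (Set.Icc y (P 0) \ Set.Ioo (max y p) (min (P 0) q)) := by
  rintro a ⟨⟨hya, -⟩, -⟩ b ⟨⟨-, hb⟩, hb'⟩ hab
  rcases hb.eq_or_lt with rfl | htop
  · exact symm_top_le P a
  rcases hab.eq_or_lt with rfl | hab
  · exact le_rfl
  rcases le_or_gt b p with hbp | hpb
  · exact hP.symm_le_of_le_top (.inl hbp) hb hab.le
  have hqb : q ≤ b := not_lt.1 fun hbq =>
    hb' ⟨max_lt (hya.trans_lt hab) hpb, lt_min htop hbq⟩
  rcases le_total q a with hqa | haq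
  · exact hP.symm_le_of_le_top (.inr hqa) hb hab.le
  · exact (hP.symm_le_of_le_top (.inr le_rfl) hb hqb).trans
      (hP.symm_right_threshold_le (hqb.trans hb) haq)

end IsHybridPref

end Hybrid

section Ballots

variable {p q : Fin m} {β : Finset (Fin n) → Lottery m}

theorem ConstrainedRD.exists_prob_upSet_insert (hβ : ConstrainedRD p q β) (i : Fin n) :
    ∃ e : ℝ, ∀ S, i ∉ S → ∀ k, p < k → k ≤ q →
      (β (insert i S)).prob (upSet k) = (β S).prob (upSet k) + e := by
  obtain ⟨ε, -, hε, hβ⟩ := hβ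
  refine ⟨ε i, fun S hi k hpk hkq => ?_⟩
  have prob_eq (T : Finset (Fin n)) : (β T).prob (upSet k) = ∑ j ∈ T, ε j := by
    rw [(β T).prob_upSet_eq_of_prob_add_prob_eq_one hpk hkq, (hβ T).1]
    rw [(hβ T).1, (hβ T).2, sum_add_sum_compl, hε]
  rw [prob_eq, prob_eq, sum_insert hi, add_comm]

variable [NeZero m] {D : Set (Pref m)} {P P' : Profile D n} {i : Fin n}

theorem mem_voterSet {k : Fin m} : i ∈ voterSet P k ↔ k ≤ topOf (P i) := by simp [voterSet]

theorem voterSet_congr (hP : ∀ j ≠ i, topOf (P' j) = topOf (P j)) {k : Fin m}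
    (hk : k ≤ topOf (P' i) ↔ k ≤ topOf (P i)) : voterSet P' k = voterSet P k := by
  ext j
  rcases eq_or_ne j i with rfl | hj
  · simp only [mem_voterSet, hk]
  · simp only [mem_voterSet, hP j hj]

theorem voterSet_eq_insert (hP : ∀ j ≠ i, topOf (P' j) = topOf (P j)) {k : Fin m}
    (hk : k ≤ topOf (P' i)) : voterSet P' k = insert i (voterSet P k) := by
  ext j
  rcases eq_or_ne j i with rfl | hj
  · simp [mem_voterSet, hk]
  · simp [mem_voterSet, hP j hj, hj]

theorem tailProb_of_lt (β : Finset (Fin n) → Lottery m) (P : Profile D n) {k : ℕ} (hk : k < m) :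
    tailProb β P k = (β (voterSet P ⟨k, hk⟩)).prob (upSet ⟨k, hk⟩) :=
  dif_pos hk

theorem tailProb_congr (β : Finset (Fin n) → Lottery m)
    (hP : ∀ j ≠ i, topOf (P' j) = topOf (P j)) {k : ℕ}
    (hk : k ≤ (topOf (P' i) : ℕ) ↔ k ≤ (topOf (P i) : ℕ)) :
    tailProb β P' k = tailProb β P k := by
  unfold tailProb
  split_ifs with hkm
  · rw [voterSet_congr hP hk]
  · rfl

theorem tailProb_le_tailProb (hβ : BallotMonotone β)
    (hP : ∀ j ≠ i, topOf (P' j) = topOf (P j)) {k : ℕ} (hk : (topOf (P i) : ℕ) < k)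
    (hk' : k ≤ (topOf (P' i) : ℕ)) : tailProb β P k ≤ tailProb β P' k := by
  have hkm : k < m := hk'.trans_lt (topOf (P' i)).2
  have hi : i ∉ voterSet P ⟨k, hkm⟩ := fun hi => hk.not_ge (mem_voterSet.1 hi)
  rw [tailProb_of_lt β P hkm, tailProb_of_lt β P' hkm, voterSet_eq_insert hP hk']
  exact hβ _ _ (ssubset_insert hi) _

theorem ConstrainedRD.exists_tailProb_sub_eq (hβ : ConstrainedRD p q β)
    (hP : ∀ j ≠ i, topOf (P' j) = topOf (P j)) :
    ∃ e : ℝ, ∀ k : ℕ, (topOf (P i) : ℕ) < k → k ≤ (topOf (P' i) : ℕ) → (p : ℕ) < k →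
      k ≤ (q : ℕ) → tailProb β P' k - tailProb β P k = e := by
  obtain ⟨e, he⟩ := hβ.exists_prob_upSet_insert i
  refine ⟨e, fun k hk hk' hpk hkq => ?_⟩
  have hkm : k < m := hk'.trans_lt (topOf (P' i)).2
  have hi : i ∉ voterSet P ⟨k, hkm⟩ := fun hi => hk.not_ge (mem_voterSet.1 hi)
  rw [tailProb_of_lt β P hkm, tailProb_of_lt β P' hkm, voterSet_eq_insert hP hk',
    he _ hi _ hpk hkq, add_sub_cancel_left]

theorem tailProb_of_unanimous (hβ : BallotUnanimity β) {a : Fin m} (hP : ∀ i, topOf (P i) = a)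
    (k : ℕ) : tailProb β P k = if k ≤ (a : ℕ) then 1 else 0 := by
  rcases lt_or_ge k m with hkm | hmk
  · rw [tailProb_of_lt β P hkm]
    split_ifs with hka
    · have hvoters : voterSet P ⟨k, hkm⟩ = univ :=
        eq_univ_of_forall fun j => mem_voterSet.2 ((hP j).symm ▸ hka)
      rw [hvoters, hβ.1, prob_degLottery, if_pos (mem_upSet.2 (Nat.le_sub_one_of_lt hkm))]
    · have hvoters : voterSet P ⟨k, hkm⟩ = ∅ :=
        eq_empty_of_forall_notMem fun j hj => hka (hP j ▸ mem_voterSet.1 hj)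
      have hk_pos : ¬ (⟨k, hkm⟩ : Fin m) ≤ 0 := fun h => hka ((Fin.le_def.1 h).trans (by simp))
      rw [hvoters, hβ.2, prob_degLottery, if_neg (mt mem_upSet.1 hk_pos)]
  · rw [tailProb, dif_neg hmk.not_gt, if_neg (a.2.trans_le hmk).not_ge]

end Ballots

namespace IsPFBRWith

variable [NeZero m] {D : Set (Pref m)} {p q : Fin m} {φ : Profile D n → Lottery m}
  {β : Finset (Fin n) → Lottery m} {P P' : Profile D n} {i : Fin n}

theorem unanimous (hφ : IsPFBRWith φ β) : Unanimous φ := by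
  intro P a ha
  refine Subtype.ext (funext fun b => ?_)
  rw [hφ.2.2, tailProb_of_unanimous hφ.1 ha, tailProb_of_unanimous hφ.1 ha]
  simp only [degLottery, Fin.ext_iff]
  split_ifs <;> first | omega | norm_num

theorem expect_sub_expect (hφ : IsPFBRWith φ β) (hP : ∀ j ≠ i, topOf (P' j) = topOf (P j))
    (hle : topOf (P i) ≤ topOf (P' i)) {v : Fin m → ℝ} {u : ℕ → ℝ} (huv : ∀ a : Fin m, u a = v a) :
    (φ P').expect v - (φ P).expect v =
      ∑ k ∈ Ico (topOf (P i) : ℕ) (topOf (P' i)),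
        (tailProb β P' (k + 1) - tailProb β P (k + 1)) * (u (k + 1) - u k) := by
  rw [← sum_range_mul_sub_eq_sum_Ico (d := fun k => tailProb β P' k - tailProb β P k)
    (topOf (P' i)).2, sum_range, Lottery.expect, Lottery.expect, ← sum_sub_distrib]
  · refine sum_congr rfl fun a _ => ?_
    rw [hφ.2.2, hφ.2.2, huv]
    ring
  · intro k hk
    rw [Fin.le_def] at hle
    refine sub_eq_zero.2 (tailProb_congr β hP ?_)
    rw [Finset.mem_Ioc] at hk
    omega

theorem expect_le_expect (hφ : IsPFBRWith φ β) (hβ : ConstrainedRD p q β)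
    (hP : ∀ j ≠ i, topOf (P' j) = topOf (P j)) (hle : topOf (P i) ≤ topOf (P' i))
    {v : Fin m → ℝ}
    (hv : AntitoneOn v (Set.Icc (topOf (P i)) (topOf (P' i)) \
      Set.Ioo (max (topOf (P i)) p) (min (topOf (P' i)) q))) :
    (φ P').expect v ≤ (φ P).expect v := by
  set u : ℕ → ℝ := Function.extend Fin.val v 0
  have huv (a : Fin m) : u a = v a := Fin.val_injective.extend_apply v 0 a
  obtain ⟨e, he⟩ := hβ.exists_tailProb_sub_eq hP
  rw [← sub_nonpos, hφ.expect_sub_expect hP hle huv]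
  refine sum_Ico_mul_sub_nonpos (s := ↑(max (topOf (P i)) p)) (t := ↑(min (topOf (P' i)) q))
    (d := fun k => tailProb β P' k - tailProb β P k) (e := e) ?_ ?_ ?_ ?_ ?_
  · exact Fin.le_def.1 (le_max_left _ _)
  · exact Fin.le_def.1 (min_le_left _ _)
  · intro k hk
    rw [Finset.mem_Ico] at hk
    exact sub_nonneg.2 (tailProb_le_tailProb hφ.2.1 hP (by omega) (by omega))
  · intro k hk
    rw [Finset.mem_Ico, Fin.coe_max, Fin.coe_min] at hk
    exact he (k + 1) (by omega) (by omega) (by omega) (by omega)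
  · intro a ha b hb hab
    lift a to Fin m using ha.1.2.trans_lt (topOf (P' i)).2
    lift b to Fin m using hb.1.2.trans_lt (topOf (P' i)).2
    rw [huv, huv]
    exact hv ha hb hab

theorem strategyProof (hφ : IsPFBRWith φ β) (hβ : ConstrainedRD p q β)
    (hD : D ⊆ hybridDomain p q) : StrategyProof φ := by
  intro i P Pi' k _
  have hPi : IsHybridPref p q (P i).1 := hD (P i).2
  set P' := Function.update P i Pi'
  have hP (j : Fin n) (hj : j ≠ i) : topOf (P' j) = topOf (P j) :=
    congrArg topOf (Function.update_of_ne hj _ _)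
  rw [topSum_eq_expect, topSum_eq_expect]
  rcases le_total (topOf (P i)) (topOf (P' i)) with hright | hleft
  · exact hφ.expect_le_expect hβ hP hright fun a ha b hb hab =>
      topIndicator_le_topIndicator k (hPi.monotoneOn_symm_right _ ha hb hab)
  · rw [← neg_le_neg_iff, ← Lottery.expect_neg, ← Lottery.expect_neg]
    exact hφ.expect_le_expect hβ (fun j hj => (hP j hj).symm) hleft fun a ha b hb hab =>
      neg_le_neg (topIndicator_le_topIndicator k (hPi.antitoneOn_symm_left _ ha hb hab))

end IsPFBRWith

end PFBRPaper

theorem pfbr_is_unanimous_and_strategyproof_general {m n : ℕ} [NeZero m] {D : Set (Pref m)}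
    {p q : Fin m} (hD : D ⊆ hybridDomain p q) {φ : Profile D n → Lottery m}
    {β : Finset (Fin n) → Lottery m} (hφ : IsPFBRWith φ β) (hβ : ConstrainedRD p q β) :
    Unanimous φ ∧ StrategyProof φ :=
  ⟨hφ.unanimous, hφ.strategyProof hβ hD⟩

/-- Every `(p,q)`-PFBR on the full `(p,q)`-hybrid domain (`q - p > 1`)
is unanimous and strategy-proof. -/
theorem pfbr_is_unanimous_and_strategyproof (m n : ℕ) [NeZero m] (hm : 3 ≤ m) (hn : 2 ≤ n)
    (p q : Fin m) (hgap : (p : ℕ) + 1 < (q : ℕ))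
    (φ : Profile (hybridDomain p q) n → Lottery m)
    (β : Finset (Fin n) → Lottery m)
    (hβ : IsPFBRWith φ β) (hcrd : ConstrainedRD p q β) :
    Unanimous φ ∧ StrategyProof φ :=
  pfbr_is_unanimous_and_strategyproof_general Set.Subset.rfl hβ hcrd
end
end
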